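/- Let ε ∈ (0,1), p ∈ {1,…,n−1}, δ = ε·a_p/(3n), and a'_i = ⌊a_i/δ⌋. Suppose (S_A, S_B) is a feasible pair for the Semi-Restricted SSR instance (A,p) that minimizes MR(S_1,S_2,A') over all feasible pairs for (A,p), and suppose (S_1^*, S_2^*) is a feasible pair for (A,p) that minimizes MR(S_1,S_2,A) over all feasible pairs for (A,p). Then MR(S_A, S_B, A) ≤ (1+ε)·MR(S_1^*, S_2^*, A). -/

import Mathlib

open Finset

/-- Ratio of the sums of two index sets, with weights `f`. -/
noncomputable def ssrR (f : ℕ → ℝ) (S₁ S₂ : Finset ℕ) : ℝ :=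
  (∑ i ∈ S₁, f i) / (∑ j ∈ S₂, f j)

/-- Max ratio of the sums of two index sets, with weights `f`. -/
noncomputable def ssrMR (f : ℕ → ℝ) (S₁ S₂ : Finset ℕ) : ℝ :=
  max (ssrR f S₁ S₂) (ssrR f S₂ S₁)

/-- Feasibility for the Semi-Restricted SSR instance `(A, p)`:
`S₁, S₂ ⊆ {1,…,n}` are nonempty, disjoint, `max S₁ = p` and `max S₂ > p`. -/
def SemiFeasible (n p : ℕ) (S₁ S₂ : Finset ℕ) : Prop :=
  S₁ ⊆ Finset.Icc 1 n ∧ S₂ ⊆ Finset.Icc 1 n ∧ S₁.Nonempty ∧ S₂.Nonempty ∧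
    Disjoint S₁ S₂ ∧ S₁.max = (p : WithBot ℕ) ∧ (p : WithBot ℕ) < S₂.max

/-!
Write `η = ε / 3`, so that `δ = η * a p / n`. Rounding loses less than `δ` per index, hence at most
`#U * δ` on an index set `U`. Each side `U` of a feasible pair has at most `n - 1` elements, because
the other side is nonempty and disjoint from it, and it contains an index at which `a` is at least
`a p = (n / η) * δ`. The scaled sum over `U` is therefore at least `⌊n / η⌋`, and since `η ≤ 1`
gives `η * ⌊n / η⌋ ≥ n - 1 ≥ #U`, the loss on `U` is at most `η` times `δ` times the scaled sum.
Max ratios for `a` and for the scaled weights thus agree up to a factor `1 + η` in either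
direction, and comparing two pairs costs `(1 + η) ^ 2 ≤ 1 + ε`.
-/

section FloorSums

variable {ι K : Type*} [Field K] [LinearOrder K] [IsStrictOrderedRing K] [FloorRing K]
  {f : ι → K} {δ η x : K} {U : Finset ι} {n : ℕ} {q : ι}

theorem sum_floor_div_le_inv_mul_sum :
    ∑ i ∈ U, (⌊f i / δ⌋ : K) ≤ δ⁻¹ * ∑ i ∈ U, f i := by
  rw [mul_sum]
  refine sum_le_sum fun i _ => ?_
  rw [inv_mul_eq_div]
  exact Int.floor_le _

theorem sum_le_mul_sum_floor_div_add_card (hδ : 0 < δ) :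
    ∑ i ∈ U, f i ≤ δ * (∑ i ∈ U, (⌊f i / δ⌋ : K) + #U) := by
  have hterm : ∀ i ∈ U, f i ≤ δ * ((⌊f i / δ⌋ : K) + 1) := fun i _ =>
    (div_le_iff₀' hδ).1 (Int.lt_floor_add_one (f i / δ)).le
  calc ∑ i ∈ U, f i ≤ ∑ i ∈ U, δ * ((⌊f i / δ⌋ : K) + 1) := sum_le_sum hterm
    _ = δ * (∑ i ∈ U, (⌊f i / δ⌋ : K) + #U) := by
      rw [← mul_sum, sum_add_distrib, sum_const, nsmul_one]

theorem sum_le_mul_sum_floor_div (hδ : 0 < δ)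
    (hU : (#U : K) ≤ η * ∑ i ∈ U, (⌊f i / δ⌋ : K)) :
    ∑ i ∈ U, f i ≤ (1 + η) * δ * ∑ i ∈ U, (⌊f i / δ⌋ : K) :=
  calc ∑ i ∈ U, f i ≤ δ * (∑ i ∈ U, (⌊f i / δ⌋ : K) + #U) := sum_le_mul_sum_floor_div_add_card hδ
    _ ≤ δ * (∑ i ∈ U, (⌊f i / δ⌋ : K) + η * ∑ i ∈ U, (⌊f i / δ⌋ : K)) :=
      mul_le_mul_of_nonneg_left (by gcongr) hδ.le
    _ = (1 + η) * δ * ∑ i ∈ U, (⌊f i / δ⌋ : K) := by ring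

theorem sum_floor_div_pos (hη : 0 < η) (hU₀ : U.Nonempty)
    (hU : (#U : K) ≤ η * ∑ i ∈ U, (⌊f i / δ⌋ : K)) :
    0 < ∑ i ∈ U, (⌊f i / δ⌋ : K) :=
  pos_of_mul_pos_right ((Nat.cast_pos.2 hU₀.card_pos).trans_le hU) hη.le

theorem floor_div_le_sum_floor_div (hδ : 0 < δ) (hf : ∀ i ∈ U, 0 ≤ f i) (hq : q ∈ U)
    (hx : x ≤ f q) : (⌊x / δ⌋ : K) ≤ ∑ i ∈ U, (⌊f i / δ⌋ : K) := by
  have hnonneg : ∀ i ∈ U, (0 : K) ≤ ⌊f i / δ⌋ := fun i hi =>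
    Int.cast_nonneg (Int.floor_nonneg.2 (div_nonneg (hf i hi) hδ.le))
  calc (⌊x / δ⌋ : K) ≤ ⌊f q / δ⌋ := by gcongr
    _ ≤ ∑ i ∈ U, (⌊f i / δ⌋ : K) := single_le_sum hnonneg hq

theorem sub_one_le_mul_floor_div (hη₀ : 0 < η) (hη₁ : η ≤ 1) : x - 1 ≤ η * ⌊x / η⌋ := by
  have hfloor : x ≤ η * ((⌊x / η⌋ : K) + 1) :=
    (div_le_iff₀' hη₀).1 (Int.lt_floor_add_one (x / η)).le
  linarith

theorem card_le_mul_sum_floor_div (hη₀ : 0 < η) (hη₁ : η ≤ 1) (hx₀ : 0 < x) (hδ : δ = η * x / n)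
    (hU : #U < n) (hf : ∀ i ∈ U, 0 ≤ f i) (hq : q ∈ U) (hx : x ≤ f q) :
    (#U : K) ≤ η * ∑ i ∈ U, (⌊f i / δ⌋ : K) := by
  have hn : (0 : K) < n := Nat.cast_pos.2 (Nat.zero_lt_of_lt hU)
  have hδ₀ : 0 < δ := hδ ▸ by positivity
  have hquot : x / δ = n / η := by rw [hδ]; field_simp
  have hcard : (#U : K) + 1 ≤ n := mod_cast hU
  calc (#U : K) ≤ n - 1 := le_sub_iff_add_le.2 hcard
    _ ≤ η * ⌊(n : K) / η⌋ := sub_one_le_mul_floor_div hη₀ hη₁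
    _ ≤ η * ∑ i ∈ U, (⌊f i / δ⌋ : K) := by
      rw [← hquot]
      gcongr
      exact floor_div_le_sum_floor_div hδ₀ hf hq hx

end FloorSums

section MaxRatio

variable {f g : ℕ → ℝ} {S T : Finset ℕ} {c d δ η : ℝ}

theorem ssrMR_nonneg (hS : 0 ≤ ∑ i ∈ S, f i) (hT : 0 ≤ ∑ i ∈ T, f i) : 0 ≤ ssrMR f S T :=
  le_max_of_le_left (div_nonneg hS hT)

theorem ssrR_le_mul_ssrR (hc : 0 ≤ c) (hd : 0 < d) (hS₀ : 0 ≤ ∑ i ∈ S, g i)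
    (hT₀ : 0 < ∑ i ∈ T, g i) (hS : ∑ i ∈ S, f i ≤ c * ∑ i ∈ S, g i)
    (hT : ∑ i ∈ T, g i ≤ d * ∑ i ∈ T, f i) : ssrR f S T ≤ c * d * ssrR g S T :=
  calc ssrR f S T ≤ (c * ∑ i ∈ S, g i) / ((∑ i ∈ T, g i) / d) :=
        div_le_div₀ (mul_nonneg hc hS₀) hS (div_pos hT₀ hd) ((div_le_iff₀' hd).2 hT)
    _ = c * d * ssrR g S T := by rw [ssrR]; field_simp

theorem ssrMR_le_mul_ssrMR (hc : 0 ≤ c) (hd : 0 < d)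
    (hS₀ : 0 < ∑ i ∈ S, g i) (hT₀ : 0 < ∑ i ∈ T, g i)
    (hSfg : ∑ i ∈ S, f i ≤ c * ∑ i ∈ S, g i) (hTfg : ∑ i ∈ T, f i ≤ c * ∑ i ∈ T, g i)
    (hSgf : ∑ i ∈ S, g i ≤ d * ∑ i ∈ S, f i) (hTgf : ∑ i ∈ T, g i ≤ d * ∑ i ∈ T, f i) :
    ssrMR f S T ≤ c * d * ssrMR g S T := by
  rw [ssrMR, ssrMR, mul_max_of_nonneg _ _ (mul_nonneg hc hd.le)]
  exact max_le_max (ssrR_le_mul_ssrR hc hd hS₀.le hT₀ hSfg hTgf)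
    (ssrR_le_mul_ssrR hc hd hT₀.le hS₀ hTfg hSgf)

theorem ssrMR_le_mul_ssrMR_floor_div (hδ : 0 < δ) (hη : 0 < η) (hS₀ : S.Nonempty)
    (hT₀ : T.Nonempty) (hS : (#S : ℝ) ≤ η * ∑ i ∈ S, (⌊f i / δ⌋ : ℝ))
    (hT : (#T : ℝ) ≤ η * ∑ i ∈ T, (⌊f i / δ⌋ : ℝ)) :
    ssrMR f S T ≤ (1 + η) * ssrMR (fun i => (⌊f i / δ⌋ : ℝ)) S T :=
  calc ssrMR f S T ≤ (1 + η) * δ * δ⁻¹ * ssrMR (fun i => (⌊f i / δ⌋ : ℝ)) S T :=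
        ssrMR_le_mul_ssrMR (by positivity) (inv_pos.2 hδ)
          (sum_floor_div_pos hη hS₀ hS) (sum_floor_div_pos hη hT₀ hT)
          (sum_le_mul_sum_floor_div hδ hS) (sum_le_mul_sum_floor_div hδ hT)
          sum_floor_div_le_inv_mul_sum sum_floor_div_le_inv_mul_sum
    _ = (1 + η) * ssrMR (fun i => (⌊f i / δ⌋ : ℝ)) S T := by
      rw [mul_inv_cancel_right₀ hδ.ne']

theorem ssrMR_floor_div_le_mul_ssrMR (hδ : 0 < δ) (hη : 0 < η)
    (hS₀ : 0 < ∑ i ∈ S, f i) (hT₀ : 0 < ∑ i ∈ T, f i)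
    (hS : (#S : ℝ) ≤ η * ∑ i ∈ S, (⌊f i / δ⌋ : ℝ))
    (hT : (#T : ℝ) ≤ η * ∑ i ∈ T, (⌊f i / δ⌋ : ℝ)) :
    ssrMR (fun i => (⌊f i / δ⌋ : ℝ)) S T ≤ (1 + η) * ssrMR f S T :=
  calc ssrMR (fun i => (⌊f i / δ⌋ : ℝ)) S T ≤ δ⁻¹ * ((1 + η) * δ) * ssrMR f S T :=
        ssrMR_le_mul_ssrMR (inv_nonneg.2 hδ.le) (by positivity) hS₀ hT₀
          sum_floor_div_le_inv_mul_sum sum_floor_div_le_inv_mul_sum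
          (sum_le_mul_sum_floor_div hδ hS) (sum_le_mul_sum_floor_div hδ hT)
    _ = (1 + η) * ssrMR f S T := by field_simp

end MaxRatio

namespace SemiFeasible

variable {n p : ℕ} {S₁ S₂ : Finset ℕ} {a : ℕ → ℝ} {δ η : ℝ}

theorem subset_left (h : SemiFeasible n p S₁ S₂) : S₁ ⊆ Icc 1 n := h.1

theorem subset_right (h : SemiFeasible n p S₁ S₂) : S₂ ⊆ Icc 1 n := h.2.1

theorem nonempty_left (h : SemiFeasible n p S₁ S₂) : S₁.Nonempty := h.2.2.1

theorem nonempty_right (h : SemiFeasible n p S₁ S₂) : S₂.Nonempty := h.2.2.2.1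

theorem card_add_card_le (h : SemiFeasible n p S₁ S₂) : #S₁ + #S₂ ≤ n := by
  obtain ⟨hS₁, hS₂, -, -, hdisj, -, -⟩ := h
  calc #S₁ + #S₂ = #(S₁ ∪ S₂) := (card_union_of_disjoint hdisj).symm
    _ ≤ #(Icc 1 n) := card_le_card (union_subset hS₁ hS₂)
    _ = n := by rw [Nat.card_Icc, Nat.add_sub_cancel]

theorem card_left_lt (h : SemiFeasible n p S₁ S₂) : #S₁ < n := by
  have := h.card_add_card_le
  have := h.nonempty_right.card_pos
  omega

theorem card_right_lt (h : SemiFeasible n p S₁ S₂) : #S₂ < n := by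
  have := h.card_add_card_le
  have := h.nonempty_left.card_pos
  omega

theorem mem_left (h : SemiFeasible n p S₁ S₂) : p ∈ S₁ := by
  obtain ⟨-, -, -, -, -, hmax, -⟩ := h
  exact mem_of_max hmax

theorem exists_lt_mem_right (h : SemiFeasible n p S₁ S₂) : ∃ q ∈ S₂, p < q := by
  obtain ⟨-, -, -, -, -, -, hlt⟩ := h
  obtain ⟨q, hq, hpq⟩ := Finset.lt_sup_iff.1 hlt
  exact ⟨q, hq, WithBot.coe_lt_coe.1 hpq⟩

theorem exists_mem_right_le (h : SemiFeasible n p S₁ S₂) (hle : ∀ i ∈ Icc p n, a p ≤ a i) :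
    ∃ q ∈ S₂, a p ≤ a q := by
  obtain ⟨q, hq, hpq⟩ := h.exists_lt_mem_right
  have hqn : q ≤ n := (mem_Icc.1 (h.subset_right hq)).2
  exact ⟨q, hq, hle q (mem_Icc.2 ⟨hpq.le, hqn⟩)⟩

theorem sum_left_pos (h : SemiFeasible n p S₁ S₂) (ha : ∀ i ∈ Icc 1 n, 0 ≤ a i)
    (hap : 0 < a p) : 0 < ∑ i ∈ S₁, a i :=
  sum_pos' (fun i hi => ha i (h.subset_left hi)) ⟨p, h.mem_left, hap⟩

theorem sum_right_pos (h : SemiFeasible n p S₁ S₂) (ha : ∀ i ∈ Icc 1 n, 0 ≤ a i)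
    (hap : 0 < a p) (hle : ∀ i ∈ Icc p n, a p ≤ a i) : 0 < ∑ i ∈ S₂, a i := by
  obtain ⟨q, hq, hapq⟩ := h.exists_mem_right_le hle
  exact sum_pos' (fun i hi => ha i (h.subset_right hi)) ⟨q, hq, hap.trans_le hapq⟩

theorem scale_pos (h : SemiFeasible n p S₁ S₂) (hap : 0 < a p) (hη₀ : 0 < η)
    (hδ : δ = η * a p / n) : 0 < δ := by
  have hn : (0 : ℝ) < n := Nat.cast_pos.2 (Nat.zero_lt_of_lt h.card_left_lt)
  rw [hδ]
  positivity

theorem card_left_le_mul_sum_floor_div (h : SemiFeasible n p S₁ S₂)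
    (ha : ∀ i ∈ Icc 1 n, 0 ≤ a i) (hap : 0 < a p)
    (hη₀ : 0 < η) (hη₁ : η ≤ 1) (hδ : δ = η * a p / n) :
    (#S₁ : ℝ) ≤ η * ∑ i ∈ S₁, (⌊a i / δ⌋ : ℝ) :=
  card_le_mul_sum_floor_div hη₀ hη₁ hap hδ h.card_left_lt
    (fun i hi => ha i (h.subset_left hi)) h.mem_left le_rfl

theorem card_right_le_mul_sum_floor_div (h : SemiFeasible n p S₁ S₂)
    (ha : ∀ i ∈ Icc 1 n, 0 ≤ a i) (hap : 0 < a p) (hle : ∀ i ∈ Icc p n, a p ≤ a i)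
    (hη₀ : 0 < η) (hη₁ : η ≤ 1) (hδ : δ = η * a p / n) :
    (#S₂ : ℝ) ≤ η * ∑ i ∈ S₂, (⌊a i / δ⌋ : ℝ) := by
  obtain ⟨q, hq, hapq⟩ := h.exists_mem_right_le hle
  exact card_le_mul_sum_floor_div hη₀ hη₁ hap hδ h.card_right_lt
    (fun i hi => ha i (h.subset_right hi)) hq hapq

theorem ssrMR_le_mul_ssrMR_floor_div (h : SemiFeasible n p S₁ S₂)
    (ha : ∀ i ∈ Icc 1 n, 0 ≤ a i) (hap : 0 < a p) (hle : ∀ i ∈ Icc p n, a p ≤ a i)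
    (hη₀ : 0 < η) (hη₁ : η ≤ 1) (hδ : δ = η * a p / n) :
    ssrMR a S₁ S₂ ≤ (1 + η) * ssrMR (fun i => (⌊a i / δ⌋ : ℝ)) S₁ S₂ :=
  _root_.ssrMR_le_mul_ssrMR_floor_div (h.scale_pos hap hη₀ hδ) hη₀ h.nonempty_left h.nonempty_right
    (h.card_left_le_mul_sum_floor_div ha hap hη₀ hη₁ hδ)
    (h.card_right_le_mul_sum_floor_div ha hap hle hη₀ hη₁ hδ)

theorem ssrMR_floor_div_le_mul_ssrMR (h : SemiFeasible n p S₁ S₂)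
    (ha : ∀ i ∈ Icc 1 n, 0 ≤ a i) (hap : 0 < a p) (hle : ∀ i ∈ Icc p n, a p ≤ a i)
    (hη₀ : 0 < η) (hη₁ : η ≤ 1) (hδ : δ = η * a p / n) :
    ssrMR (fun i => (⌊a i / δ⌋ : ℝ)) S₁ S₂ ≤ (1 + η) * ssrMR a S₁ S₂ :=
  _root_.ssrMR_floor_div_le_mul_ssrMR (h.scale_pos hap hη₀ hδ) hη₀
    (h.sum_left_pos ha hap) (h.sum_right_pos ha hap hle)
    (h.card_left_le_mul_sum_floor_div ha hap hη₀ hη₁ hδ)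
    (h.card_right_le_mul_sum_floor_div ha hap hle hη₀ hη₁ hδ)

theorem ssrMR_nonneg (h : SemiFeasible n p S₁ S₂) (ha : ∀ i ∈ Icc 1 n, 0 ≤ a i) :
    0 ≤ ssrMR a S₁ S₂ :=
  _root_.ssrMR_nonneg (sum_nonneg fun i hi => ha i (h.subset_left hi))
    (sum_nonneg fun i hi => ha i (h.subset_right hi))

end SemiFeasible

theorem stmt11_general (n p : ℕ) (a : ℕ → ℝ)
    (ha : ∀ i ∈ Icc 1 n, 0 ≤ a i) (hap : 0 < a p) (hle : ∀ i ∈ Icc p n, a p ≤ a i)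
    (ε : ℝ) (hε₀ : 0 < ε) (hε₃ : ε ≤ 3)
    (δ : ℝ) (hδ : δ = ε * a p / (3 * n))
    (a' : ℕ → ℤ) (ha' : ∀ i, a' i = ⌊a i / δ⌋)
    (SA SB : Finset ℕ) (hAB : SemiFeasible n p SA SB)
    (S₁ S₂ : Finset ℕ) (hS : SemiFeasible n p S₁ S₂)
    (hMR : ssrMR (fun i => (a' i : ℝ)) SA SB ≤ ssrMR (fun i => (a' i : ℝ)) S₁ S₂) :
    ssrMR a SA SB ≤ (1 + ε) * ssrMR a S₁ S₂ := by
  obtain rfl : a' = fun i => ⌊a i / δ⌋ := funext ha'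
  have hδ' : δ = ε / 3 * a p / n := by rw [hδ]; ring
  have hη₀ : 0 < ε / 3 := by positivity
  have hη₁ : ε / 3 ≤ 1 := by linarith
  have hsq : (1 + ε / 3) ^ 2 ≤ 1 + ε := by nlinarith
  have hMR₀ : 0 ≤ ssrMR a S₁ S₂ := hS.ssrMR_nonneg ha
  calc ssrMR a SA SB
      ≤ (1 + ε / 3) * ssrMR (fun i => (⌊a i / δ⌋ : ℝ)) SA SB :=
        hAB.ssrMR_le_mul_ssrMR_floor_div ha hap hle hη₀ hη₁ hδ'
    _ ≤ (1 + ε / 3) * ssrMR (fun i => (⌊a i / δ⌋ : ℝ)) S₁ S₂ := by gcongr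
    _ ≤ (1 + ε / 3) * ((1 + ε / 3) * ssrMR a S₁ S₂) := by
        gcongr
        exact hS.ssrMR_floor_div_le_mul_ssrMR ha hap hle hη₀ hη₁ hδ'
    _ = (1 + ε / 3) ^ 2 * ssrMR a S₁ S₂ := by ring
    _ ≤ (1 + ε) * ssrMR a S₁ S₂ := mul_le_mul_of_nonneg_right hsq hMR₀

/-- if `(S_A, S_B)` is a feasible pair for `(A, p)` minimizing the max
ratio with respect to the scaled instance `A'`, and `(S₁*, S₂*)` is a feasible pair
minimizing the max ratio with respect to `A`, then
`MR(S_A, S_B, A) ≤ (1+ε)·MR(S₁*, S₂*, A)`. -/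
theorem stmt11 (n : ℕ) (a : ℕ → ℕ)
    (hpos : ∀ i ∈ Finset.Icc 1 n, 0 < a i)
    (hmono : StrictMonoOn a (Finset.Icc 1 n))
    (ε : ℝ) (hε0 : 0 < ε) (hε1 : ε < 1)
    (p : ℕ) (hp1 : 1 ≤ p) (hpn : p < n)
    (δ : ℝ) (hδ : δ = ε * (a p : ℝ) / (3 * n))
    (a' : ℕ → ℤ) (ha' : ∀ i, a' i = ⌊(a i : ℝ) / δ⌋)
    (SA SB : Finset ℕ)
    (hfeasAB : SemiFeasible n p SA SB)
    (hoptAB : ∀ T₁ T₂ : Finset ℕ, SemiFeasible n p T₁ T₂ →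
      ssrMR (fun i => (a' i : ℝ)) SA SB ≤ ssrMR (fun i => (a' i : ℝ)) T₁ T₂)
    (S₁ S₂ : Finset ℕ)
    (hfeas : SemiFeasible n p S₁ S₂)
    (hopt : ∀ T₁ T₂ : Finset ℕ, SemiFeasible n p T₁ T₂ →
      ssrMR (fun i => (a i : ℝ)) S₁ S₂ ≤ ssrMR (fun i => (a i : ℝ)) T₁ T₂) :
    ssrMR (fun i => (a i : ℝ)) SA SB ≤
      (1 + ε) * ssrMR (fun i => (a i : ℝ)) S₁ S₂ := by
  have hp : p ∈ Icc 1 n := mem_Icc.2 ⟨hp1, hpn.le⟩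
  have hle : ∀ i ∈ Icc p n, a p ≤ a i := fun i hi =>
    hmono.monotoneOn (mem_coe.2 hp) (mem_coe.2 (Icc_subset_Icc_left hp1 hi)) (mem_Icc.1 hi).1
  exact stmt11_general n p (fun i => a i) (fun i _ => Nat.cast_nonneg (a i))
    (Nat.cast_pos.2 (hpos p hp)) (mod_cast hle) ε hε0 (by linarith) δ hδ a' ha'
    SA SB hfeasAB S₁ S₂ hfeas (hoptAB S₁ S₂ hfeas)
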